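/- Let α > 0 and σ > 0, and define R(t) = (σ²/(2α)) (1 − e^{−2αt}) for t > 0 and p : (0,∞) × ℝ → ℝ by p(t,x) = (2π R(t))^{-1/2} · exp( − x² / (2 R(t)) ). Then for every t > 0 and x ∈ ℝ, ∂_t p(t,x) = (σ²/2) e^{−2αt} · ∂²_x p(t,x). -/

import Mathlib

/-!
As a function of its variance `v`, the centered Gaussian density solves the heat equation
`∂_v g = (1/2) ∂²_x g`. The density of the process at time `t` is `g` at variance `R t`, so the
chain rule gives `∂_t p = (R' t / 2) ∂²_x p`, and `R' t = σ² e^(-2αt)`.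
-/

section CenteredGaussianDensity

/-- The centered Gaussian density of variance `v`. The variance is a real number, unlike in
`ProbabilityTheory.gaussianPDFReal`, so that the density can be differentiated in it; for `v ≤ 0`
the conventions for `Real.rpow` make the function identically `0`. -/
noncomputable def centeredGaussianDensity (v x : ℝ) : ℝ :=
  (2 * Real.pi * v) ^ (-(1 / 2) : ℝ) * Real.exp (-x ^ 2 / (2 * v))

theorem hasDerivAt_centeredGaussianDensity (v x : ℝ) :
    HasDerivAt (centeredGaussianDensity v) (-(x / v) * centeredGaussianDensity v x) x := by
  have h_exponent : HasDerivAt (fun y : ℝ => -y ^ 2 / (2 * v)) (-(x / v)) x :=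
    ((hasDerivAt_pow 2 x).fun_neg.div_const (2 * v)).congr_deriv (by norm_num; ring)
  exact (h_exponent.exp.const_mul _).congr_deriv (by rw [centeredGaussianDensity]; ring)

theorem iteratedDeriv_two_centeredGaussianDensity (v x : ℝ) :
    iteratedDeriv 2 (centeredGaussianDensity v) x =
      ((x / v) ^ 2 - 1 / v) * centeredGaussianDensity v x := by
  have h_deriv : deriv (centeredGaussianDensity v) =
      fun y => -(y / v) * centeredGaussianDensity v y :=
    funext fun y => (hasDerivAt_centeredGaussianDensity v y).deriv
  have h_factor : HasDerivAt (fun y : ℝ => -(y / v)) (-(1 / v)) x :=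
    ((hasDerivAt_id' x).div_const v).fun_neg
  rw [iteratedDeriv_succ, iteratedDeriv_one, h_deriv,
    (h_factor.fun_mul (hasDerivAt_centeredGaussianDensity v x)).deriv]
  ring

variable {v : ℝ}

theorem hasDerivAt_centeredGaussianDensity_variance (hv : v ≠ 0) (x : ℝ) :
    HasDerivAt (fun w => centeredGaussianDensity w x)
      (1 / 2 * (((x / v) ^ 2 - 1 / v) * centeredGaussianDensity v x)) v := by
  have h_base : 2 * Real.pi * v ≠ 0 := mul_ne_zero Real.two_pi_pos.ne' hv
  have h_factor : HasDerivAt (fun w : ℝ => (2 * Real.pi * w) ^ (-(1 / 2) : ℝ))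
      (-(1 / (2 * v)) * (2 * Real.pi * v) ^ (-(1 / 2) : ℝ)) v := by
    refine (((hasDerivAt_id' v).const_mul (2 * Real.pi)).rpow_const
      (Or.inl h_base)).congr_deriv ?_
    rw [Real.rpow_sub_one h_base]
    field_simp
  have h_exponent : HasDerivAt (fun w : ℝ => -x ^ 2 / (2 * w)) (1 / 2 * (x / v) ^ 2) v := by
    refine ((hasDerivAt_const v (-x ^ 2)).fun_div ((hasDerivAt_id' v).const_mul 2)
      (mul_ne_zero two_ne_zero hv)).congr_deriv ?_
    field_simp
    ring
  refine (h_factor.fun_mul h_exponent.exp).congr_deriv ?_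
  rw [centeredGaussianDensity]
  ring

theorem centeredGaussianDensity_heat_equation (hv : v ≠ 0) (x : ℝ) :
    HasDerivAt (fun w => centeredGaussianDensity w x)
      (1 / 2 * iteratedDeriv 2 (centeredGaussianDensity v) x) v := by
  rw [iteratedDeriv_two_centeredGaussianDensity]
  exact hasDerivAt_centeredGaussianDensity_variance hv x

theorem hasDerivAt_centeredGaussianDensity_comp {R : ℝ → ℝ} {R' t : ℝ}
    (hR : HasDerivAt R R' t) (hRt : R t ≠ 0) (x : ℝ) :
    HasDerivAt (fun s => centeredGaussianDensity (R s) x)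
      (R' / 2 * iteratedDeriv 2 (centeredGaussianDensity (R t)) x) t :=
  ((centeredGaussianDensity_heat_equation hRt x).comp t hR).congr_deriv (by ring)

end CenteredGaussianDensity

section OrnsteinUhlenbeckVariance

/-- The variance at time `t` of the Ornstein–Uhlenbeck process with drift rate `α` and diffusion
coefficient `σ`, started at `0`. -/
noncomputable def ouVariance (α σ t : ℝ) : ℝ :=
  σ ^ 2 / (2 * α) * (1 - Real.exp (-(2 * α * t)))

variable {α σ t : ℝ}

theorem ouVariance_ne_zero (hα : α ≠ 0) (hσ : σ ≠ 0) (ht : t ≠ 0) : ouVariance α σ t ≠ 0 := by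
  have h_exp : Real.exp (-(2 * α * t)) ≠ 1 := by
    simp [Real.exp_eq_one_iff, hα, ht]
  have h_coeff : σ ^ 2 / (2 * α) ≠ 0 := by positivity
  exact mul_ne_zero h_coeff (sub_ne_zero.mpr h_exp.symm)

theorem hasDerivAt_ouVariance (hα : α ≠ 0) (σ t : ℝ) :
    HasDerivAt (ouVariance α σ) (σ ^ 2 * Real.exp (-(2 * α * t))) t := by
  have h_exponent : HasDerivAt (fun s : ℝ => -(2 * α * s)) (-(2 * α * 1)) t :=
    ((hasDerivAt_id' t).const_mul (2 * α)).fun_neg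
  refine ((h_exponent.exp.const_sub 1).const_mul (σ ^ 2 / (2 * α))).congr_deriv ?_
  field_simp

end OrnsteinUhlenbeckVariance

theorem fpk_ou_time_dependent_form_general {α σ : ℝ} (hα : α ≠ 0) (hσ : σ ≠ 0) {R : ℝ → ℝ}
    (hR : ∀ t : ℝ, 0 < t → R t = σ ^ 2 / (2 * α) * (1 - Real.exp (-(2 * α * t))))
    {p : ℝ → ℝ → ℝ}
    (hp : ∀ t : ℝ, 0 < t → ∀ x : ℝ,
      p t x = (2 * Real.pi * R t) ^ (-(1 / 2) : ℝ) *
        Real.exp (-x ^ 2 / (2 * R t)))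
    {t : ℝ} (ht : 0 < t) (x : ℝ) :
    deriv (fun s => p s x) t =
      σ ^ 2 / 2 * Real.exp (-(2 * α * t)) * iteratedDeriv 2 (fun y => p t y) x := by
  have h_density : ∀ s, 0 < s → p s = centeredGaussianDensity (ouVariance α σ s) := by
    intro s hs
    funext y
    rw [hp s hs, hR s hs, centeredGaussianDensity, ouVariance]
  have h_near : (fun s => p s x) =ᶠ[nhds t] fun s => centeredGaussianDensity (ouVariance α σ s) x :=
    (eventually_gt_nhds ht).mono fun s hs => congrFun (h_density s hs) x
  have h_fpk := hasDerivAt_centeredGaussianDensity_comp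
    (hasDerivAt_ouVariance hα σ t) (ouVariance_ne_zero hα hσ ht.ne') x
  rw [h_near.deriv_eq, h_fpk.deriv, h_density t ht]
  ring

/- STATEMENT 13 (Example 5, equation (44)): FPK equation for the centered
Ornstein-Uhlenbeck process, with variance function R(t) = (σ²/(2α))(1 - e^(-2αt)). -/
theorem fpk_ou_time_dependent_form (α σ : ℝ) (hα : 0 < α) (hσ : 0 < σ)
    (R : ℝ → ℝ)
    (hR : ∀ t : ℝ, 0 < t → R t = σ ^ 2 / (2 * α) * (1 - Real.exp (-(2 * α * t))))
    (p : ℝ → ℝ → ℝ)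
    (hp : ∀ t : ℝ, 0 < t → ∀ x : ℝ,
      p t x = (2 * Real.pi * R t) ^ (-(1 / 2) : ℝ) *
        Real.exp (-x ^ 2 / (2 * R t)))
    (t : ℝ) (ht : 0 < t) (x : ℝ) :
    deriv (fun s => p s x) t =
      σ ^ 2 / 2 * Real.exp (-(2 * α * t)) * iteratedDeriv 2 (fun y => p t y) x :=
  fpk_ou_time_dependent_form_general hα.ne' hσ.ne' hR hp ht x
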